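/- arXiv:math/0506281 — 2 statements merged into one kernel-verified Lean document; each statement's English description precedes it below -/
import Mathlib

section
/- Let G be a connected bipartite finite simple graph on vertex set V = {v_1,...,v_n} with bipartition (V_1, V_2), and let F be a facet of the edge cone R+A. If F = H_A ∩ R+A = H_B ∩ R+A with A a proper subset of V_1 and B a proper subset of V_1, then A = B. -/
open Finset

/-- The edge vector `e_i + e_j` associated to an edge `{i, j}`. -/
def edgeVector {V : Type*} [DecidableEq V] (i j : V) : V → ℝ :=
  fun k => (if k = i then 1 else 0) + (if k = j then 1 else 0)

/-- The edge cone of a graph `G`: all nonnegative real linear combinations of the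
edge vectors of `G`. -/
def edgeCone {V : Type*} [Fintype V] [DecidableEq V] (G : SimpleGraph V) :
    Set (V → ℝ) :=
  { x | ∃ c : V → V → ℝ, (∀ i j, 0 ≤ c i j) ∧ (∀ i j, ¬ G.Adj i j → c i j = 0) ∧
        x = ∑ i, ∑ j, c i j • edgeVector i j }

/-- The neighbor set `N(A)`: vertices adjacent to at least one vertex of `A`. -/
def nbr {V : Type*} [Fintype V] [DecidableEq V] (G : SimpleGraph V)
    [DecidableRel G.Adj] (A : Finset V) : Finset V :=
  Finset.univ.filter fun v => ∃ a ∈ A, G.Adj v a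

/-- `A` is an independent set of vertices of `G`. -/
def IsIndep {V : Type*} (G : SimpleGraph V) (A : Finset V) : Prop :=
  ∀ a ∈ A, ∀ b ∈ A, ¬ G.Adj a b

/-- `F` is a face of the cone `Q`: `F = Q ∩ {x | ⟪x, a⟫ = 0}` for some `a` with
`Q ⊆ {x | ⟪x, a⟫ ≤ 0}`. -/
def IsFace {V : Type*} [Fintype V] (Q F : Set (V → ℝ)) : Prop :=
  ∃ a : V → ℝ, (∀ x ∈ Q, ∑ i, x i * a i ≤ 0) ∧ F = Q ∩ {x | ∑ i, x i * a i = 0}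

/-- `F` is a facet of the cone `Q`: a face whose linear span has dimension one less
than the dimension of the linear span of `Q`. -/
def IsFacet {V : Type*} [Fintype V] (Q F : Set (V → ℝ)) : Prop :=
  IsFace Q F ∧
    Module.finrank ℝ (Submodule.span ℝ F) = Module.finrank ℝ (Submodule.span ℝ Q) - 1

/-!
For adjacent `u ∈ V₁` and `v ∈ V₂` and for `A ⊆ V₁`, the edge vector of `uv` lies on `H_A` exactly
when `u ∈ A ↔ v ∈ N(A)`. Suppose `H_A` and `H_B` contain the same edge vectors, let `u ∈ A \ B`,
and let `u, v, w` be a walk. The edge `uv` is on `H_A`, hence on `H_B`, so `v ∉ N(B)`. Then `w ∉ B`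
and `wv` is on `H_B`, hence on `H_A`, so `w ∈ A`. Thus `A \ B` is closed under walks of length two.
By connectedness it is empty or all of `V₁`, and the latter is impossible when `A ≠ V₁`.
-/

section Neighbors

variable {V : Type*} [Fintype V] [DecidableEq V] {G : SimpleGraph V} [DecidableRel G.Adj]
  {A V₁ V₂ : Finset V}

lemma mem_nbr {v : V} : v ∈ nbr G A ↔ ∃ a ∈ A, G.Adj v a := by
  simp only [nbr, mem_filter_univ]

lemma nbr_union (A B : Finset V) : nbr G (A ∪ B) = nbr G A ∪ nbr G B := by
  ext v
  simp only [mem_nbr, mem_union, or_and_right, exists_or]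

lemma nbr_subset_of_isBipartiteWith (hG : G.IsBipartiteWith (V₁ : Set V) V₂) (hA : A ⊆ V₁) :
    nbr G A ⊆ V₂ := by
  intro v hv
  obtain ⟨a, ha, hva⟩ := mem_nbr.1 hv
  exact hG.mem_of_mem_adj (hA ha) hva.symm

lemma eq_univ_of_nbr_subset (hG : G.Preconnected) (hA : A.Nonempty) (hclosed : nbr G A ⊆ A) :
    A = univ := by
  obtain ⟨a, ha⟩ := hA
  refine eq_univ_iff_forall.2 fun v => by_contra fun hv => ?_
  obtain ⟨p⟩ := hG a v
  obtain ⟨d, -, hfst, hsnd⟩ := p.exists_boundary_dart (A : Set V) ha hv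
  exact hsnd (hclosed (mem_nbr.2 ⟨d.fst, hfst, d.adj.symm⟩))

lemma eq_of_nbr_nbr_subset (hG : G.Preconnected) (hbip : G.IsBipartiteWith (V₁ : Set V) V₂)
    (hne : A.Nonempty) (hA : A ⊆ V₁) (hclosed : nbr G (nbr G A) ⊆ A) : A = V₁ := by
  have hcover : A ∪ nbr G A = univ := by
    refine eq_univ_of_nbr_subset hG (hne.mono subset_union_left) ?_
    rw [nbr_union, union_comm A]
    exact union_subset_union_right hclosed
  refine hA.antisymm fun v hv => ?_
  have hv' : v ∉ nbr G A := fun h =>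
    disjoint_left.1 (disjoint_coe.1 hbip.disjoint) hv (nbr_subset_of_isBipartiteWith hbip hA h)
  exact (mem_union.1 (hcover ▸ mem_univ v)).resolve_right hv'

end Neighbors

section EdgeVector

variable {V : Type*} [DecidableEq V]

lemma sum_edgeVector (S : Finset V) (u v : V) :
    ∑ i ∈ S, edgeVector u v i = (if u ∈ S then 1 else 0) + (if v ∈ S then 1 else 0) := by
  simp only [edgeVector, sum_add_distrib, sum_ite_eq']

lemma edgeVector_mem_edgeCone [Fintype V] {G : SimpleGraph V} {u v : V} (huv : G.Adj u v) :
    edgeVector u v ∈ edgeCone G := by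
  refine ⟨fun i j => if i = u ∧ j = v then 1 else 0, fun i j => ?_, fun i j hij => if_neg ?_, ?_⟩
  · exact ite_nonneg zero_le_one le_rfl
  · exact fun ⟨hi, hj⟩ => hij (hi ▸ hj ▸ huv)
  · simp only [ite_and, ite_smul, one_smul, zero_smul, sum_ite_eq', sum_ite_irrel, sum_const_zero,
      mem_univ, if_true]

end EdgeVector

section NeighborHyperplane

variable {V : Type*} [Fintype V] [DecidableEq V] {G : SimpleGraph V} [DecidableRel G.Adj]
  {A B V₁ V₂ : Finset V}

/-- The hyperplane `H_A = {x | ∑_{i ∈ A} x_i = ∑_{i ∈ N(A)} x_i}`, which cuts a face out of the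
edge cone. As a bare set, it is all of `ℝ^V` when `A = ∅`. -/
def neighborHyperplane (G : SimpleGraph V) [DecidableRel G.Adj] (A : Finset V) : Set (V → ℝ) :=
  {x | ∑ i ∈ A, x i = ∑ i ∈ nbr G A, x i}

lemma edgeVector_mem_neighborHyperplane_iff {u v : V} (hu : u ∉ nbr G A) (hv : v ∉ A) :
    edgeVector u v ∈ neighborHyperplane G A ↔ (u ∈ A ↔ v ∈ nbr G A) := by
  change ∑ i ∈ A, edgeVector u v i = ∑ i ∈ nbr G A, edgeVector u v i ↔ _
  rw [sum_edgeVector, sum_edgeVector, if_neg hu, if_neg hv]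
  by_cases huA : u ∈ A <;> by_cases hvA : v ∈ nbr G A <;> simp [huA, hvA]

lemma edgeVector_mem_neighborHyperplane_iff_of_isBipartiteWith
    (hbip : G.IsBipartiteWith (V₁ : Set V) V₂) (hA : A ⊆ V₁) {u v : V} (hu : u ∈ V₁)
    (hv : v ∈ V₂) : edgeVector u v ∈ neighborHyperplane G A ↔ (u ∈ A ↔ v ∈ nbr G A) := by
  have hdisj : Disjoint V₁ V₂ := disjoint_coe.1 hbip.disjoint
  exact edgeVector_mem_neighborHyperplane_iff
    (fun h => disjoint_left.1 hdisj hu (nbr_subset_of_isBipartiteWith hbip hA h))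
    (fun h => disjoint_left.1 hdisj (hA h) hv)

lemma mem_neighborHyperplane_iff_of_inter_edgeCone_eq
    (hface : neighborHyperplane G A ∩ edgeCone G = neighborHyperplane G B ∩ edgeCone G)
    {x : V → ℝ} (hx : x ∈ edgeCone G) :
    x ∈ neighborHyperplane G A ↔ x ∈ neighborHyperplane G B := by
  simpa only [Set.mem_inter_iff, hx, and_true] using Set.ext_iff.1 hface x

lemma nbr_nbr_sdiff_subset (hbip : G.IsBipartiteWith (V₁ : Set V) V₂) (hA : A ⊆ V₁) (hB : B ⊆ V₁)
    (hface : neighborHyperplane G A ∩ edgeCone G = neighborHyperplane G B ∩ edgeCone G) :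
    nbr G (nbr G (A \ B)) ⊆ A \ B := by
  have hsame {u v : V} (hu : u ∈ V₁) (huv : G.Adj u v) :
      (u ∈ A ↔ v ∈ nbr G A) ↔ (u ∈ B ↔ v ∈ nbr G B) := by
    have hv : v ∈ V₂ := hbip.mem_of_mem_adj hu huv
    rw [← edgeVector_mem_neighborHyperplane_iff_of_isBipartiteWith hbip hA hu hv,
      ← edgeVector_mem_neighborHyperplane_iff_of_isBipartiteWith hbip hB hu hv]
    exact mem_neighborHyperplane_iff_of_inter_edgeCone_eq hface (edgeVector_mem_edgeCone huv)
  intro w hw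
  obtain ⟨v, hv, hwv⟩ := mem_nbr.1 hw
  obtain ⟨u, hu, hvu⟩ := mem_nbr.1 hv
  obtain ⟨huA, huB⟩ := mem_sdiff.1 hu
  have hvA : v ∈ nbr G A := mem_nbr.2 ⟨u, huA, hvu⟩
  have hvB : v ∉ nbr G B := fun h =>
    huB (((hsame (hA huA) hvu.symm).1 (iff_of_true huA hvA)).2 h)
  have hwB : w ∉ B := fun h => hvB (mem_nbr.2 ⟨w, h, hwv.symm⟩)
  have hwV₁ : w ∈ V₁ := hbip.symm.mem_of_mem_adj (hbip.mem_of_mem_adj (hA huA) hvu.symm) hwv.symm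
  have hwA : w ∈ A := ((hsame hwV₁ hwv).2 (iff_of_false hwB hvB)).2 hvA
  exact mem_sdiff.2 ⟨hwA, hwB⟩

lemma subset_of_neighborHyperplane_inter_edgeCone_eq (hG : G.Preconnected)
    (hbip : G.IsBipartiteWith (V₁ : Set V) V₂) (hA : A ⊂ V₁) (hB : B ⊆ V₁)
    (hface : neighborHyperplane G A ∩ edgeCone G = neighborHyperplane G B ∩ edgeCone G) :
    A ⊆ B := by
  by_contra hAB
  have hsdiff : A \ B = V₁ := eq_of_nbr_nbr_subset hG hbip (sdiff_nonempty.2 hAB)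
    (sdiff_subset.trans hA.subset) (nbr_nbr_sdiff_subset hbip hA.subset hB hface)
  exact hA.not_subset (hsdiff ▸ sdiff_subset)

theorem stmt13_general (hG : G.Preconnected) (hbip : G.IsBipartiteWith (V₁ : Set V) V₂)
    (hA : A ⊂ V₁) (hB : B ⊂ V₁)
    (hface : neighborHyperplane G A ∩ edgeCone G = neighborHyperplane G B ∩ edgeCone G) :
    A = B :=
  (subset_of_neighborHyperplane_inter_edgeCone_eq hG hbip hA hB.subset hface).antisymm
    (subset_of_neighborHyperplane_inter_edgeCone_eq hG hbip hB hA.subset hface.symm)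

end NeighborHyperplane

/-- For a connected bipartite graph `G` with bipartition `(V₁, V₂)`: if a facet `F` of
the edge cone satisfies `F = H_A ∩ ℝ₊𝒜 = H_B ∩ ℝ₊𝒜` with `A ⊊ V₁` and `B ⊊ V₁`,
then `A = B`. -/
theorem stmt13 {n : ℕ} (G : SimpleGraph (Fin n)) [DecidableRel G.Adj]
    (hG : G.Connected)
    (V₁ V₂ : Finset (Fin n)) (hdisj : Disjoint V₁ V₂)
    (hunion : V₁ ∪ V₂ = Finset.univ)
    (hbip : ∀ i j, G.Adj i j → (i ∈ V₁ ∧ j ∈ V₂) ∨ (i ∈ V₂ ∧ j ∈ V₁))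
    (F : Set (Fin n → ℝ)) (hF : IsFacet (edgeCone G) F)
    (A B : Finset (Fin n)) (hAsub : A ⊆ V₁) (hAne : A ≠ V₁)
    (hBsub : B ⊆ V₁) (hBne : B ≠ V₁)
    (hFA : F = {x : Fin n → ℝ | ∑ i ∈ A, x i = ∑ i ∈ nbr G A, x i} ∩ edgeCone G)
    (hFB : F = {x : Fin n → ℝ | ∑ i ∈ B, x i = ∑ i ∈ nbr G B, x i} ∩ edgeCone G) :
    A = B := by
  exact stmt13_general hG.preconnected ⟨disjoint_coe.2 hdisj, hbip⟩
    (hAsub.ssubset_of_ne hAne) (hBsub.ssubset_of_ne hBne) (hFA.symm.trans hFB)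
end

section
/- Let G = K_{m,n} be the complete bipartite graph with 2 ≤ m ≤ n, with bipartition V_1 = {v_1,...,v_m} and V_2 = {v_{m+1},...,v_{m+n}}. Then the facets of the edge cone R+A of G are exactly the m + n sets R+A ∩ {z ∈ R^{m+n} : z_i = 0} for i = 1,...,m+n. -/
open Finset

/-!
The face cut out by a supporting hyperplane `a` is spanned by the tight edges `i j`, those with
`a i + a j = 0`. In a complete bipartite graph, if every vertex lies on a tight edge, then every
edge `i j` is tight: pick tight edges `i j'` and `i' j`; the nonpositive values of `a` on `i j` and
`i' j'` add up to those on `i j'` and `i' j`, that is, to `0`. So a proper face misses all edges at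
some vertex `v` and lies in the hyperplane `z v = 0`. Conversely `z v = 0` cuts out a facet, because
modulo the edges avoiding `v` all edges at `v` are equal: `e_v + e_u` and `e_v + e_w` differ by
`(e_v' + e_u) - (e_v' + e_w)` for any other vertex `v'` on the side of `v`. Since two nested facets
coincide, the coordinate facets are the only ones.
-/

section Face

variable {V : Type*} [Fintype V] {Q F F' : Set (V → ℝ)}

namespace IsFace

theorem subset (hF : IsFace Q F) : F ⊆ Q := by
  obtain ⟨a, -, rfl⟩ := hF
  exact Set.inter_subset_left

theorem inter_span_eq (hF : IsFace Q F) : Q ∩ Submodule.span ℝ F = F := by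
  refine Set.Subset.antisymm ?_ (Set.subset_inter hF.subset Submodule.subset_span)
  obtain ⟨a, -, rfl⟩ := hF
  let hyperplane := LinearMap.ker ((dotProductBilin ℝ ℝ).flip a)
  have hspan : Submodule.span ℝ (Q ∩ {x | x ⬝ᵥ a = 0}) ≤ hyperplane :=
    Submodule.span_le.2 fun _ hx => hx.2
  exact Set.inter_subset_inter_right Q hspan

end IsFace

theorem isFace_inter_coordinate_eq_zero {v : V} (hQ : ∀ x ∈ Q, 0 ≤ x v) :
    IsFace Q (Q ∩ {z | z v = 0}) := by
  classical
  have hpair (x : V → ℝ) : x ⬝ᵥ -Pi.single v 1 = -x v := by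
    rw [dotProduct_neg, dotProduct_single_one]
  refine ⟨-Pi.single v 1, fun x hx => (hpair x).trans_le (neg_nonpos.2 (hQ x hx)), ?_⟩
  have hplane : {z : V → ℝ | z v = 0} = {x | x ⬝ᵥ -Pi.single v 1 = 0} := by
    simp only [hpair, neg_eq_zero]
  exact congrArg (Q ∩ ·) hplane

namespace IsFacet

theorem eq_of_subset (hF : IsFacet Q F) (hF' : IsFacet Q F') (h : F ⊆ F') : F = F' := by
  have hspan : Submodule.span ℝ F = Submodule.span ℝ F' :=
    Submodule.eq_of_le_of_finrank_eq (Submodule.span_mono h) (hF.2.trans hF'.2.symm)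
  rw [← hF.1.inter_span_eq, hspan, hF'.1.inter_span_eq]

theorem ne_of_mem_of_ne_zero (hF : IsFacet Q F) {x : V → ℝ} (hx : x ∈ Q) (hx0 : x ≠ 0) :
    F ≠ Q := by
  rintro rfl
  have hpos : 1 ≤ Module.finrank ℝ (Submodule.span ℝ F) :=
    Submodule.one_le_finrank_iff.2 fun h => hx0 (Submodule.span_eq_bot.1 h x hx)
  have hdim := hF.2
  lia

end IsFacet

end Face

section EdgeVector

variable {V : Type*} [DecidableEq V]

theorem edgeVector_eq_single_add_single (i j : V) :
    edgeVector i j = Pi.single i 1 + Pi.single j 1 := by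
  ext k
  simp only [edgeVector, Pi.add_apply, Pi.single_apply]

theorem edgeVector_comm (i j : V) : edgeVector i j = edgeVector j i := by
  simp only [edgeVector_eq_single_add_single, add_comm]

theorem edgeVector_nonneg (i j : V) : 0 ≤ edgeVector i j := by
  rw [edgeVector_eq_single_add_single]
  exact add_nonneg (Pi.single_nonneg.2 zero_le_one) (Pi.single_nonneg.2 zero_le_one)

theorem edgeVector_apply_of_ne {i j v : V} (hi : v ≠ i) (hj : v ≠ j) : edgeVector i j v = 0 := by
  simp [edgeVector, hi, hj]

theorem edgeVector_apply_left_ne_zero (i j : V) : edgeVector i j i ≠ 0 := by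
  simp only [edgeVector, if_true]
  positivity

theorem edgeVector_dotProduct [Fintype V] (i j : V) (a : V → ℝ) :
    edgeVector i j ⬝ᵥ a = a i + a j := by
  rw [edgeVector_eq_single_add_single, add_dotProduct, single_one_dotProduct,
    single_one_dotProduct]

theorem edgeVector_sub_edgeVector (v v' u w : V) :
    edgeVector v u - edgeVector v w = edgeVector v' u - edgeVector v' w := by
  simp only [edgeVector_eq_single_add_single, add_sub_add_left_eq_sub]

end EdgeVector

section EdgeCone

variable {V : Type*} [Fintype V] [DecidableEq V] {G H : SimpleGraph V}

theorem edgeVector_mem_edgeCone_s19 {i j : V} (hij : G.Adj i j) : edgeVector i j ∈ edgeCone G := by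
  refine ⟨fun k l => if k = i ∧ l = j then 1 else 0, fun k l => ?_, fun k l hkl => ?_, ?_⟩
  · positivity
  · exact if_neg fun ⟨hk, hl⟩ => hkl (hk ▸ hl ▸ hij)
  · simp [ite_and]

theorem edgeCone_mono (h : G ≤ H) : edgeCone G ⊆ edgeCone H := by
  rintro x ⟨c, hc, hsupp, rfl⟩
  exact ⟨c, hc, fun i j hij => hsupp i j fun hG => hij (h hG), rfl⟩

theorem nonneg_of_mem_edgeCone {x : V → ℝ} (hx : x ∈ edgeCone G) : 0 ≤ x := by
  obtain ⟨c, hc, -, rfl⟩ := hx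
  exact sum_nonneg fun i _ => sum_nonneg fun j _ => smul_nonneg (hc i j) (edgeVector_nonneg i j)

theorem edgeCone_subset_submodule {W : Submodule ℝ (V → ℝ)}
    (hW : ∀ i j, G.Adj i j → edgeVector i j ∈ W) : edgeCone G ⊆ W := by
  rintro x ⟨c, -, hsupp, rfl⟩
  refine W.sum_mem fun i _ => W.sum_mem fun j _ => ?_
  by_cases hij : G.Adj i j
  · exact W.smul_mem _ (hW i j hij)
  · simp only [hsupp i j hij, zero_smul, W.zero_mem]

theorem apply_eq_zero_of_isIsolated {v : V} (hv : G.IsIsolated v) {z : V → ℝ}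
    (hz : z ∈ edgeCone G) : z v = 0 := by
  refine edgeCone_subset_submodule (W := LinearMap.ker (LinearMap.proj v)) (fun i j hij => ?_) hz
  refine edgeVector_apply_of_ne ?_ ?_ <;> rintro rfl
  exacts [hv j hij, hv i hij.symm]

theorem sum_smul_edgeVector_dotProduct (c : V → V → ℝ) (a : V → ℝ) :
    (∑ i, ∑ j, c i j • edgeVector i j) ⬝ᵥ a = ∑ i, ∑ j, c i j * (a i + a j) := by
  simp only [sum_dotProduct, smul_dotProduct, edgeVector_dotProduct, smul_eq_mul]

end EdgeCone

section TightSubgraph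

variable {V : Type*}

/-- The subgraph of the edges that are tight for the vertex weights `a`, i.e. whose edge vector is
orthogonal to `a`. If `a` is nonpositive on all edge vectors, its edge cone is the face of the edge
cone of `G` supported by `a`. -/
def tightSubgraph (G : SimpleGraph V) (a : V → ℝ) : SimpleGraph V where
  Adj i j := G.Adj i j ∧ a i + a j = 0
  symm := ⟨fun _ _ h => ⟨h.1.symm, (add_comm _ _).trans h.2⟩⟩
  loopless := ⟨fun _ h => h.1.ne rfl⟩

theorem tightSubgraph_le (G : SimpleGraph V) (a : V → ℝ) : tightSubgraph G a ≤ G :=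
  fun _ _ h => h.1

variable [Fintype V] [DecidableEq V] {G : SimpleGraph V}

theorem edgeCone_inter_hyperplane_eq {a : V → ℝ} (ha : ∀ i j, G.Adj i j → a i + a j ≤ 0) :
    edgeCone G ∩ {x | x ⬝ᵥ a = 0} = edgeCone (tightSubgraph G a) := by
  refine Set.Subset.antisymm ?_ (Set.subset_inter (edgeCone_mono (tightSubgraph_le G a)) ?_)
  · rintro x ⟨⟨c, hc, hsupp, rfl⟩, hx⟩
    rw [Set.mem_ofPred_eq, sum_smul_edgeVector_dotProduct] at hx
    have hnonpos (i j) : c i j * (a i + a j) ≤ 0 := by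
      by_cases hij : G.Adj i j
      · exact mul_nonpos_of_nonneg_of_nonpos (hc i j) (ha i j hij)
      · rw [hsupp i j hij, zero_mul]
    have hzero (i j) : c i j * (a i + a j) = 0 := by
      have hi : ∑ j, c i j * (a i + a j) = 0 :=
        (sum_eq_zero_iff_of_nonpos fun i _ => sum_nonpos fun j _ => hnonpos i j).1 hx i
          (mem_univ i)
      exact (sum_eq_zero_iff_of_nonpos fun j _ => hnonpos i j).1 hi j (mem_univ j)
    refine ⟨c, hc, fun i j hij => ?_, rfl⟩
    by_contra hcij
    exact hij ⟨not_imp_comm.1 (hsupp i j) hcij, (mul_eq_zero.1 (hzero i j)).resolve_left hcij⟩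
  · exact edgeCone_subset_submodule (W := LinearMap.ker ((dotProductBilin ℝ ℝ).flip a))
      fun i j hij => (edgeVector_dotProduct i j a).trans hij.2

theorem IsFace.exists_eq_edgeCone_tightSubgraph {F : Set (V → ℝ)} (hF : IsFace (edgeCone G) F) :
    ∃ a : V → ℝ, (∀ i j, G.Adj i j → a i + a j ≤ 0) ∧ F = edgeCone (tightSubgraph G a) := by
  obtain ⟨a, hle, rfl⟩ := hF
  have ha (i j) (hij : G.Adj i j) : a i + a j ≤ 0 :=
    (edgeVector_dotProduct i j a).symm.trans_le (hle _ (edgeVector_mem_edgeCone_s19 hij))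
  exact ⟨a, ha, edgeCone_inter_hyperplane_eq ha⟩

end TightSubgraph

section CoordinateFacet

variable {V : Type*} [Fintype V] [DecidableEq V] {G : SimpleGraph V} {v v' w : V}

theorem span_edgeCone_eq_sup_span_singleton (hne : v ≠ v')
    (hsub : G.neighborSet v ⊆ G.neighborSet v') (hw : G.Adj v w) :
    Submodule.span ℝ (edgeCone G) =
      Submodule.span ℝ (edgeCone G ∩ {z | z v = 0}) ⊔ Submodule.span ℝ {edgeVector v w} := by
  set S := Submodule.span ℝ (edgeCone G ∩ {z | z v = 0})
  have avoiding {i j} (hij : G.Adj i j) (hi : v ≠ i) (hj : v ≠ j) : edgeVector i j ∈ S :=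
    Submodule.subset_span ⟨edgeVector_mem_edgeCone_s19 hij, edgeVector_apply_of_ne hi hj⟩
  have incident {u} (hu : G.Adj v u) :
      edgeVector v u ∈ S ⊔ Submodule.span ℝ {edgeVector v w} := by
    have hdiff : edgeVector v u - edgeVector v w ∈ S := by
      rw [edgeVector_sub_edgeVector v v']
      exact S.sub_mem (avoiding (hsub hu) hne hu.ne) (avoiding (hsub hw) hne hw.ne)
    rw [← sub_add_cancel (edgeVector v u) (edgeVector v w)]
    exact Submodule.add_mem_sup hdiff (Submodule.mem_span_singleton_self _)
  refine le_antisymm (Submodule.span_le.2 (edgeCone_subset_submodule fun i j hij => ?_))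
    (sup_le (Submodule.span_mono Set.inter_subset_left)
      ((Submodule.span_singleton_le_iff_mem _ _).2
        (Submodule.subset_span (edgeVector_mem_edgeCone_s19 hw))))
  obtain rfl | hi := eq_or_ne v i
  · exact incident hij
  obtain rfl | hj := eq_or_ne v j
  · exact edgeVector_comm v i ▸ incident hij.symm
  exact Submodule.mem_sup_left (avoiding hij hi hj)

theorem isFacet_edgeCone_inter_coordinate_eq_zero (hne : v ≠ v')
    (hsub : G.neighborSet v ⊆ G.neighborSet v') (hw : G.Adj v w) :
    IsFacet (edgeCone G) (edgeCone G ∩ {z | z v = 0}) := by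
  refine ⟨isFace_inter_coordinate_eq_zero fun x hx => nonneg_of_mem_edgeCone hx v, ?_⟩
  have hspan : Submodule.span ℝ (edgeCone G ∩ {z | z v = 0}) ≤
      LinearMap.ker (LinearMap.proj v) :=
    Submodule.span_le.2 fun _ hz => hz.2
  have hnotMem : edgeVector v w ∉ Submodule.span ℝ (edgeCone G ∩ {z | z v = 0}) :=
    fun h => edgeVector_apply_left_ne_zero v w (hspan h)
  rw [span_edgeCone_eq_sup_span_singleton hne hsub hw,
    Submodule.finrank_sup_span_singleton hnotMem, Nat.add_sub_cancel]

end CoordinateFacet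

section CompleteBipartite

variable {α β : Type*}

theorem add_eq_zero_of_forall_exists_add_eq_zero {M : Type*} [AddCommMonoid M] [PartialOrder M]
    [IsOrderedAddMonoid M] {f : α → M} {g : β → M} (hle : ∀ i j, f i + g j ≤ 0)
    (hf : ∀ i, ∃ j, f i + g j = 0) (hg : ∀ j, ∃ i, f i + g j = 0) (i : α) (j : β) :
    f i + g j = 0 := by
  obtain ⟨j', hij'⟩ := hf i
  obtain ⟨i', hi'j⟩ := hg j
  have hsum : (f i + g j) + (f i' + g j') = 0 := by
    rw [add_add_add_comm, add_comm (g j), ← add_add_add_comm, hij', hi'j, add_zero]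
  exact (hle i j).antisymm (hsum.ge.trans (add_le_of_nonpos_right (hle i' j')))

theorem tightSubgraph_completeBipartiteGraph_eq_self {a : α ⊕ β → ℝ}
    (ha : ∀ i j, (completeBipartiteGraph α β).Adj i j → a i + a j ≤ 0)
    (hiso : ∀ v, ¬ (tightSubgraph (completeBipartiteGraph α β) a).IsIsolated v) :
    tightSubgraph (completeBipartiteGraph α β) a = completeBipartiteGraph α β := by
  have tight_neighbor (v) : ∃ u, (completeBipartiteGraph α β).Adj v u ∧ a v + a u = 0 :=
    not_forall_not.1 (hiso v)
  have tight (i : α) (j : β) : a (.inl i) + a (.inr j) = 0 := by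
    refine add_eq_zero_of_forall_exists_add_eq_zero (f := a ∘ .inl) (g := a ∘ .inr)
      (fun i j => ha _ _ (by simp)) (fun i => ?_) (fun j => ?_) i j
    · obtain ⟨_ | j, hadj, h⟩ := tight_neighbor (.inl i)
      · simp at hadj
      · exact ⟨j, h⟩
    · obtain ⟨i | _, hadj, h⟩ := tight_neighbor (.inr j)
      · exact ⟨i, (add_comm _ _).trans h⟩
      · simp at hadj
  refine le_antisymm (tightSubgraph_le _ a) fun u w huw => ⟨huw, ?_⟩
  rcases u with i | j <;> rcases w with i' | j'
  · simp at huw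
  · exact tight i j'
  · exact (add_comm _ _).trans (tight i' j)
  · simp at huw

variable [Fintype α] [DecidableEq α] [Fintype β] [DecidableEq β]

theorem IsFace.eq_edgeCone_or_exists_apply_eq_zero {F : Set (α ⊕ β → ℝ)}
    (hF : IsFace (edgeCone (completeBipartiteGraph α β)) F) :
    F = edgeCone (completeBipartiteGraph α β) ∨ ∃ v, ∀ z ∈ F, z v = 0 := by
  obtain ⟨a, ha, rfl⟩ := hF.exists_eq_edgeCone_tightSubgraph
  by_cases hiso : ∃ v, (tightSubgraph (completeBipartiteGraph α β) a).IsIsolated v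
  · exact .inr (hiso.imp fun v hv z hz => apply_eq_zero_of_isIsolated hv hz)
  · exact .inl (congrArg edgeCone
      (tightSubgraph_completeBipartiteGraph_eq_self ha (not_exists.1 hiso)))

variable [Nontrivial α] [Nontrivial β]

theorem isFacet_edgeCone_completeBipartiteGraph_inter (v : α ⊕ β) :
    IsFacet (edgeCone (completeBipartiteGraph α β))
      (edgeCone (completeBipartiteGraph α β) ∩ {z | z v = 0}) := by
  rcases v with i | j
  · obtain ⟨i', hi'⟩ := exists_ne i
    obtain ⟨j⟩ : Nonempty β := inferInstance
    refine isFacet_edgeCone_inter_coordinate_eq_zero (v' := .inl i') (w := .inr j)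
      (Sum.inl_injective.ne hi'.symm) ?_ (by simp)
    exact fun _ h => h
  · obtain ⟨j', hj'⟩ := exists_ne j
    obtain ⟨i⟩ : Nonempty α := inferInstance
    refine isFacet_edgeCone_inter_coordinate_eq_zero (v' := .inr j') (w := .inl i)
      (Sum.inr_injective.ne hj'.symm) ?_ (by simp)
    exact fun _ h => h

theorem stmt19_general (F : Set (α ⊕ β → ℝ)) :
    IsFacet (edgeCone (completeBipartiteGraph α β)) F ↔
      ∃ v : α ⊕ β,
        F = edgeCone (completeBipartiteGraph α β) ∩ {z : α ⊕ β → ℝ | z v = 0} := by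
  constructor
  · intro hF
    obtain ⟨i⟩ : Nonempty α := inferInstance
    obtain ⟨j⟩ : Nonempty β := inferInstance
    have hproper : F ≠ edgeCone (completeBipartiteGraph α β) :=
      hF.ne_of_mem_of_ne_zero (x := edgeVector (.inl i) (.inr j))
        (edgeVector_mem_edgeCone_s19 (by simp))
        (ne_of_apply_ne (· (.inl i)) (edgeVector_apply_left_ne_zero _ _))
    obtain ⟨v, hv⟩ := hF.1.eq_edgeCone_or_exists_apply_eq_zero.resolve_left hproper
    exact ⟨v, hF.eq_of_subset (isFacet_edgeCone_completeBipartiteGraph_inter v)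
      (Set.subset_inter hF.1.subset hv)⟩
  · rintro ⟨v, rfl⟩
    exact isFacet_edgeCone_completeBipartiteGraph_inter v

end CompleteBipartite

/-- For the complete bipartite graph `K_{m,n}` with `2 ≤ m ≤ n`, the facets of the edge
cone are exactly the `m + n` sets `ℝ₊𝒜 ∩ {z | z_v = 0}` for the vertices `v`. -/
theorem stmt19 (m n : ℕ) (hm : 2 ≤ m) (hmn : m ≤ n)
    (F : Set ((Fin m ⊕ Fin n) → ℝ)) :
    IsFacet (edgeCone (completeBipartiteGraph (Fin m) (Fin n))) F ↔
      ∃ v : Fin m ⊕ Fin n,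
        F = edgeCone (completeBipartiteGraph (Fin m) (Fin n)) ∩
          {z : (Fin m ⊕ Fin n) → ℝ | z v = 0} := by
  have : Nontrivial (Fin m) := Fin.nontrivial_iff_two_le.2 hm
  have : Nontrivial (Fin n) := Fin.nontrivial_iff_two_le.2 (hm.trans hmn)
  exact stmt19_general F
end
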